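/- Let 𝔠 be a linear subspace of d×d complex matrices and suppose there exist invertible d×d matrices X and Y such that for every C ∈ 𝔠, the matrix XCY has a zero M×N block in the upper-left corner. Then there exist unitary d×d matrices U and V such that for every C ∈ 𝔠, UCV has a zero M×N block in the upper-left corner. -/

import Mathlib

open Matrix

/-- QR decomposition, in the form `Y * T = V` with `T` upper triangular and `V` unitary. -/
theorem Matrix.exists_isUpperTriangular_mul_mem_unitaryGroup {𝕜 ι : Type*} [RCLike 𝕜] [Fintype ι]
    [LinearOrder ι] [LocallyFiniteOrderBot ι] {Y : Matrix ι ι 𝕜}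
    (hY : IsUnit Y) :
    ∃ T : Matrix ι ι 𝕜, T.BlockTriangular id ∧ Y * T ∈ Matrix.unitaryGroup ι 𝕜 := by
  let f : ι → EuclideanSpace 𝕜 ι := fun j => WithLp.toLp 2 (Y.col j)
  have hf : LinearIndependent 𝕜 f :=
    (Matrix.linearIndependent_cols_iff_isUnit.2 hY).map'
      (WithLp.linearEquiv 2 𝕜 (ι → 𝕜)).symm.toLinearMap (LinearEquiv.ker _)
  have he := InnerProductSpace.gramSchmidtNormed_orthonormal hf
  set e := InnerProductSpace.gramSchmidtNormed 𝕜 f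
  have hmem : ∀ j, ∃ l ∈ Finsupp.supported 𝕜 𝕜 (Set.Iic j),
      Finsupp.linearCombination 𝕜 f l = e j := by
    intro j
    rw [← Finsupp.mem_span_image_iff_linearCombination,
      ← InnerProductSpace.span_gramSchmidt_Iic 𝕜 f j,
      ← InnerProductSpace.span_gramSchmidtNormed]
    exact Submodule.subset_span ⟨j, Set.self_mem_Iic, rfl⟩
  choose l hl hle using hmem
  have hentry : ∀ i j, (Y * Matrix.of fun a b => l b a) i j = e j i := by
    intro i j
    rw [← hle j, Finsupp.linearCombination_apply, Finsupp.sum_fintype _ _ (by simp)]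
    simp [f, Matrix.mul_apply, mul_comm]
  refine ⟨Matrix.of fun a b => l b a, fun a b hab => ?_, ?_⟩
  · by_contra hne
    exact not_le_of_gt hab (hl b (Finsupp.mem_support_iff.2 hne))
  · rw [Matrix.mem_unitaryGroup_iff']
    ext i j
    rw [Matrix.star_eq_conjTranspose, Matrix.mul_apply, Matrix.one_apply,
      ← orthonormal_iff_ite.1 he i j, PiLp.inner_apply]
    simp only [Matrix.conjTranspose_apply, hentry, RCLike.inner_apply, mul_comm,
      starRingEnd_apply]

/-- Invertible matrices in the definition of decomposability can be replaced by
unitaries: if some invertible X, Y bring every element of the subspace 𝔠 to a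
form with zero M×N upper-left block, then some unitaries U, V do as well. -/
theorem decomposable_with_unitaries (d M N : ℕ)
    (𝔠 : Submodule ℂ (Matrix (Fin d) (Fin d) ℂ))
    (X Y : Matrix (Fin d) (Fin d) ℂ) (hX : IsUnit X) (hY : IsUnit Y)
    (h : ∀ C ∈ 𝔠, ∀ i j : Fin d, (i : ℕ) < M → (j : ℕ) < N →
      (X * C * Y) i j = 0) :
    ∃ U V : Matrix (Fin d) (Fin d) ℂ,
      U ∈ Matrix.unitaryGroup (Fin d) ℂ ∧ V ∈ Matrix.unitaryGroup (Fin d) ℂ ∧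
      ∀ C ∈ 𝔠, ∀ i j : Fin d, (i : ℕ) < M → (j : ℕ) < N →
        (U * C * V) i j = 0 := by
  obtain ⟨S, hS, hSU⟩ :=
    Matrix.exists_isUpperTriangular_mul_mem_unitaryGroup ((Matrix.isUnit_transpose X).2 hX)
  obtain ⟨T, hT, hTV⟩ := Matrix.exists_isUpperTriangular_mul_mem_unitaryGroup hY
  refine ⟨(Xᵀ * S)ᵀ, Y * T, Matrix.transpose_mem_unitaryGroup_iff.2 hSU, hTV, ?_⟩
  intro C hC i j hi hj
  have hassoc : (Xᵀ * S)ᵀ * C * (Y * T) = Sᵀ * (X * C * Y) * T := by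
    simp only [Matrix.transpose_mul, Matrix.transpose_transpose, Matrix.mul_assoc]
  rw [hassoc, Matrix.mul_apply]
  refine Finset.sum_eq_zero fun b _ => ?_
  rcases lt_or_ge j b with hjb | hbj
  · rw [hT hjb, mul_zero]
  rw [Matrix.mul_apply, Finset.sum_eq_zero, zero_mul]
  intro a _
  rcases lt_or_ge i a with hia | hai
  · rw [Matrix.transpose_apply, hS hia, zero_mul]
  · rw [h C hC a b (lt_of_le_of_lt hai hi) (lt_of_le_of_lt hbj hj), mul_zero]
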